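/- Let α ∈ (0,1) and λ > 0. For every t > 0, the Caputo fractional derivative of order α of the function f(s) = E_α(−λ s^α) satisfies the eigenvalue identity (1/Γ(1−α)) ∫_0^t (t−s)^(−α) f′(s) ds = −λ E_α(−λ t^α), where f′ denotes the derivative of s ↦ E_α(−λ s^α). -/

import Mathlib

/-- The Mittag-Leffler function `E_α(x) = ∑_{k=0}^∞ x^k / Γ(αk + 1)`. -/
noncomputable def mittagLeffler (α x : ℝ) : ℝ :=
  ∑' k : ℕ, x ^ k / Real.Gamma (α * k + 1)

/-- The Caputo fractional derivative of order `α` at `t`: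
`(1/Γ(1−α)) ∫_0^t (t−s)^(−α) f′(s) ds`. -/
noncomputable def caputoDeriv (α : ℝ) (f : ℝ → ℝ) (t : ℝ) : ℝ :=
  (1 / Real.Gamma (1 - α)) * ∫ s in (0:ℝ)..t, (t - s) ^ (-α) * deriv f s

open MeasureTheory Set in
lemma ml_gamma_lower (M y : ℝ) (hM : 0 < M) (hy : 0 ≤ y) :
    M ^ y * Real.exp (-M) ≤ Real.Gamma (y + 1) := by
  rw [Real.Gamma_eq_integral (by linarith)]
  have hint := Real.GammaIntegral_convergent (s := y + 1) (by linarith)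
  have hsub : Ioi M ⊆ Ioi (0:ℝ) := Ioi_subset_Ioi hM.le
  calc M ^ y * Real.exp (-M) = ∫ x in Ioi M, M ^ y * Real.exp (-x) := by
        rw [integral_const_mul, integral_exp_neg_Ioi]
    _ ≤ ∫ x in Ioi M, Real.exp (-x) * x ^ (y + 1 - 1) := by
        apply setIntegral_mono_on
        · exact (integrableOn_exp_neg_Ioi M).const_mul _
        · exact hint.mono_set hsub
        · exact measurableSet_Ioi
        · intro x hx
          have hx' : M < x := hx
          rw [mul_comm, add_sub_cancel_right]
          gcongr
    _ ≤ _ := by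
        apply setIntegral_mono_set hint
        · filter_upwards [ae_restrict_mem measurableSet_Ioi] with x hx
          have hx' : 0 < x := hx
          simp only [Pi.zero_apply]
          positivity
        · exact Filter.Eventually.of_forall hsub

lemma ml_gamma_pos (α : ℝ) (hα : 0 < α) (k : ℕ) : 0 < Real.Gamma (α * k + 1) :=
  Real.Gamma_pos_of_pos (by positivity)

lemma ml_summable (α : ℝ) (hα : 0 < α) (x : ℝ) :
    Summable fun k : ℕ => x ^ k / Real.Gamma (α * k + 1) := by
  set c : ℝ := 2 * |x| + 1 with hc
  have hc0 : 0 < c := by positivity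
  set M : ℝ := c ^ (1 / α) with hMdef
  have hM : 0 < M := by positivity
  have hMα : M ^ α = c := by
    rw [hMdef, ← Real.rpow_mul hc0.le, one_div_mul_cancel hα.ne', Real.rpow_one]
  have hlt : |x| / c < 1 := by
    rw [div_lt_one hc0]; linarith [abs_nonneg x]
  have hg : Summable fun k : ℕ => Real.exp M * (|x| / c) ^ k :=
    (summable_geometric_of_lt_one (by positivity) hlt).mul_left _
  refine Summable.of_norm_bounded hg fun k => ?_
  have hlow := ml_gamma_lower M (α * k) hM (by positivity)
  rw [Real.rpow_mul hM.le, hMα, Real.rpow_natCast] at hlow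
  have hG := ml_gamma_pos α hα k
  rw [norm_div, norm_pow, Real.norm_eq_abs, Real.norm_of_nonneg hG.le, div_le_iff₀ hG]
  calc |x| ^ k = Real.exp M * (|x| / c) ^ k * (c ^ k * Real.exp (-M)) := by
        rw [Real.exp_neg, div_pow]
        field_simp
    _ ≤ _ := by gcongr

lemma ml_bound (α : ℝ) (hα : 0 < α) (R y : ℝ) (hR : 1 ≤ R) (hy : |y| ≤ R) (k : ℕ) :
    ‖(k : ℝ) * y ^ (k - 1) / Real.Gamma (α * k + 1)‖ ≤
      (2 * R) ^ k / Real.Gamma (α * k + 1) := by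
  have hG := ml_gamma_pos α hα k
  rw [norm_div, norm_mul, norm_pow, Real.norm_of_nonneg hG.le, Real.norm_natCast,
    Real.norm_eq_abs, mul_pow]
  gcongr
  · exact_mod_cast (Nat.lt_two_pow_self).le
  · calc |y| ^ (k - 1) ≤ R ^ (k - 1) := by gcongr
      _ ≤ R ^ k := pow_le_pow_right₀ hR (Nat.sub_le _ _)

lemma ml_hasDerivAt (α : ℝ) (hα : 0 < α) (x : ℝ) :
    HasDerivAt (mittagLeffler α)
      (∑' k : ℕ, ((k : ℝ) + 1) * x ^ k / Real.Gamma (α * (k + 1) + 1)) x := by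
  set R : ℝ := |x| + 1 with hR
  have hR1 : 1 ≤ R := by linarith [abs_nonneg x]
  have hu := ml_summable α hα (2 * R)
  have hx : x ∈ Metric.ball (0:ℝ) R := by simp [hR]
  have key := hasDerivAt_tsum_of_isPreconnected
    (g := fun (k : ℕ) (y : ℝ) => y ^ k / Real.Gamma (α * k + 1))
    (g' := fun (k : ℕ) (y : ℝ) => (k : ℝ) * y ^ (k - 1) / Real.Gamma (α * k + 1))
    (t := Metric.ball (0:ℝ) R) (y := x) (y₀ := x) hu
    Metric.isOpen_ball (convex_ball (0:ℝ) R).isPreconnected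
    (fun n y _ => (hasDerivAt_pow n y).div_const _)
    (fun n y hy => ml_bound α hα R y hR1 (by simpa using (mem_ball_zero_iff.1 hy).le) n)
    hx (ml_summable α hα x) hx
  have hs : Summable fun k : ℕ => (k : ℝ) * x ^ (k - 1) / Real.Gamma (α * k + 1) :=
    Summable.of_norm_bounded hu fun n => ml_bound α hα R x hR1 (by simp [hR]) n
  rw [hs.tsum_eq_zero_add] at key
  simp only [Nat.cast_zero, zero_mul, zero_div, zero_add, Nat.cast_add, Nat.cast_one,
    Nat.add_sub_cancel] at key
  exact key

open MeasureTheory Set in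
lemma ml_beta (u v t : ℝ) (hu : 0 < u) (hv : 0 < v) (ht : 0 < t) :
    ∫ s in (0:ℝ)..t, (t - s) ^ (v - 1) * s ^ (u - 1) =
      t ^ (u + v - 1) * (Real.Gamma u * Real.Gamma v / Real.Gamma (u + v)) := by
  have h := Complex.betaIntegral_scaled (u : ℂ) (v : ℂ) ht
  rw [Complex.betaIntegral_eq_Gamma_mul_div _ _ (by simpa) (by simpa)] at h
  apply Complex.ofReal_injective
  rw [← intervalIntegral.integral_ofReal]
  have e : ∫ s in (0:ℝ)..t, (((t - s) ^ (v - 1) * s ^ (u - 1) : ℝ) : ℂ) =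
      ∫ x in (0:ℝ)..t, (x : ℂ) ^ ((u:ℂ) - 1) * ((t : ℂ) - x) ^ ((v:ℂ) - 1) := by
    apply intervalIntegral.integral_congr
    intro s hs
    rw [uIcc_of_le ht.le] at hs
    simp only
    rw [Complex.ofReal_mul, Complex.ofReal_cpow (sub_nonneg.2 hs.2), Complex.ofReal_cpow hs.1]
    push_cast
    ring
  rw [e, h, ← Complex.ofReal_add, Complex.Gamma_ofReal, Complex.Gamma_ofReal, Complex.Gamma_ofReal]
  rw [Complex.ofReal_mul, Complex.ofReal_cpow ht.le]
  push_cast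
  rfl

open MeasureTheory Set in
theorem ml_aux (α lam : ℝ) (hα : α ∈ Set.Ioo (0:ℝ) 1)
    (t : ℝ) (ht : 0 < t) :
    ∫ s in (0:ℝ)..t, (t - s) ^ (-α) * deriv (fun s => mittagLeffler α (-lam * s ^ α)) s =
      Real.Gamma (1 - α) * (-lam * mittagLeffler α (-lam * t ^ α)) := by
  obtain ⟨h0, h1⟩ := hα
  have hG1 : 0 < Real.Gamma (1 - α) := Real.Gamma_pos_of_pos (by linarith)
  let B : ℕ → ℝ → ℝ := fun k s => (t - s) ^ (-α) * s ^ (α * (k + 1) - 1)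
  let C : ℕ → ℝ := fun k => (-lam) ^ (k + 1) / Real.Gamma (α * (k + 1))
  have hGk : ∀ k : ℕ, 0 < Real.Gamma (α * (k + 1)) :=
    fun k => Real.Gamma_pos_of_pos (by positivity)
  have hB : ∀ k, ∫ s in Ioc 0 t, B k s =
      (t ^ α) ^ k * (Real.Gamma (α * (k + 1)) * Real.Gamma (1 - α) / Real.Gamma (α * k + 1)) := by
    intro k
    have := ml_beta (α * (k + 1)) (1 - α) t (by positivity) (by linarith) ht
    rw [intervalIntegral.integral_of_le ht.le] at this
    rw [← Real.rpow_natCast, ← Real.rpow_mul ht.le]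
    have a1 : 1 - α - 1 = -α := by ring
    have a2 : α * ((k:ℝ) + 1) + (1 - α) = α * k + 1 := by ring
    rw [a1, a2, add_sub_cancel_right] at this
    exact this
  have hBi : ∀ k, Integrable (B k) (volume.restrict (Ioc 0 t)) := by
    intro k
    apply Integrable.of_integral_ne_zero
    rw [hB]
    have := hGk k
    have := ml_gamma_pos α h0 k
    positivity
  have hnorm : ∀ k, ∫ s in Ioc 0 t, ‖C k * B k s‖ =
      |C k| * ∫ s in Ioc 0 t, B k s := by
    intro k
    rw [← integral_const_mul]
    refine setIntegral_congr_fun measurableSet_Ioc fun s hs => ?_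
    have : 0 ≤ B k s :=
      mul_nonneg (Real.rpow_nonneg (sub_nonneg.2 hs.2) _) (Real.rpow_nonneg hs.1.le _)
    simp [abs_of_nonneg this]
  have hsum := hasSum_integral_of_summable_integral_norm
    (μ := volume.restrict (Ioc 0 t)) (F := fun k s => C k * B k s)
    (fun k => (hBi k).const_mul _) (by
      refine ((ml_summable α h0 (|lam| * t ^ α)).mul_left (|lam| * Real.Gamma (1 - α))).congr ?_
      intro k
      rw [hnorm, hB]
      simp only [C]
      have := hGk k
      rw [abs_div, abs_pow, abs_neg, abs_of_pos this, mul_pow, pow_succ]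
      field_simp)
  have hder : ∫ s in (0:ℝ)..t, (t - s) ^ (-α) *
      deriv (fun s => mittagLeffler α (-lam * s ^ α)) s =
      ∫ s in Ioc 0 t, ∑' k, C k * B k s := by
    rw [intervalIntegral.integral_of_le ht.le]
    refine setIntegral_congr_fun measurableSet_Ioc fun s hs => ?_
    have hs0 : 0 < s := hs.1
    have hd := (ml_hasDerivAt α h0 (-lam * s ^ α)).comp s
      (((Real.hasDerivAt_rpow_const (p := α) (Or.inl hs0.ne'))).const_mul (-lam))
    have hd' : deriv (fun s => mittagLeffler α (-lam * s ^ α)) s = _ := hd.deriv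
    rw [hd', ← tsum_mul_right, ← tsum_mul_left]
    congr 1
    ext k
    simp only [C, B]
    have e1 : s ^ (α * (k + 1) - 1) = (s ^ α) ^ k * s ^ (α - 1) := by
      rw [← Real.rpow_natCast, ← Real.rpow_mul hs0.le, ← Real.rpow_add hs0]
      ring_nf
    have hne : α * ((k:ℝ) + 1) ≠ 0 := by positivity
    rw [e1, Real.Gamma_add_one hne, mul_pow, pow_succ]
    have := hGk k
    field_simp
  rw [hder, ← hsum.tsum_eq, mittagLeffler, ← tsum_mul_left, ← tsum_mul_left]
  congr 1
  ext k
  rw [integral_const_mul, hB]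
  simp only [C]
  have := hGk k
  rw [mul_pow, pow_succ]
  field_simp

theorem caputo_deriv_mittagLeffler (α lam : ℝ) (hα : α ∈ Set.Ioo (0:ℝ) 1)
    (hlam : 0 < lam) (t : ℝ) (ht : 0 < t) :
    caputoDeriv α (fun s => mittagLeffler α (-lam * s ^ α)) t =
      -lam * mittagLeffler α (-lam * t ^ α) := by
  have hG1 : 0 < Real.Gamma (1 - α) := Real.Gamma_pos_of_pos (by linarith [hα.2])
  rw [caputoDeriv, ml_aux α lam hα t ht, ← mul_assoc, one_div_mul_cancel hG1.ne', one_mul]
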